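/- Let F be a finite field of characteristic two, let f : F → F be a pseudo-planar function, and define x * y = xy + f(x+y) + f(x) + f(y). Then (F, +, *) is a presemifield if and only if f is quadratic, i.e. f(x+y+z) + f(x+y) + f(x+z) + f(y+z) + f(x) + f(y) + f(z) = 0 for all x, y, z ∈ F. -/

import Mathlib

/-!
Up to additive constants, `y ↦ f (y + x) - f y + x * y` is left multiplication by `x` for the
product `x * y + polar f x y`, where `polar f x y = f (x + y) - f x - f y`.  So pseudo-planarity
makes left multiplication by any `x ≠ 0` injective.  Distributivity of the product is biadditivity
of `polar f`, whose obstruction is the third difference of `f`.  Once it vanishes, `f 0 = 0`, so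
`0` is a right zero of the product and injectivity excludes zero divisors.
In characteristic two all signs disappear.
-/

open QuadraticMap (polar polar_comm)

section Quadratic

variable {A B : Type*} [AddCommGroup A] [AddCommGroup B] {f : A → B}

/-- A map between abelian groups is quadratic if its third differences at the origin vanish. The
sum omits the term `f 0`, so that quadratic maps send `0` to `0`; unlike for `QuadraticMap`,
no homogeneity is required. -/
def IsQuadratic (f : A → B) : Prop :=
  ∀ x y z, f (x + y + z) - f (x + y) - f (x + z) - f (y + z) + f x + f y + f z = 0

theorem isQuadratic_iff_polar_add_left :
    IsQuadratic f ↔ ∀ x y z, polar f (x + y) z = polar f x z + polar f y z := by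
  refine forall₃_congr fun x y z => ?_
  rw [← sub_eq_zero (a := polar f (x + y) z)]
  simp only [polar]
  abel_nf

theorem IsQuadratic.polar_add_left (hf : IsQuadratic f) (x y z : A) :
    polar f (x + y) z = polar f x z + polar f y z :=
  isQuadratic_iff_polar_add_left.mp hf x y z

theorem IsQuadratic.polar_add_right (hf : IsQuadratic f) (x y z : A) :
    polar f x (y + z) = polar f x y + polar f x z := by
  simp only [polar_comm f x, hf.polar_add_left]

theorem IsQuadratic.map_zero (hf : IsQuadratic f) : f 0 = 0 := by
  simpa using hf 0 0 0

end Quadratic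

/-- The conditions on a multiplication, given as a bare function, that make it a presemifield
multiplication on the underlying additive structure. -/
def IsPresemifieldMul {R : Type*} [Add R] [Zero R] (mul : R → R → R) : Prop :=
  (∀ x y z, mul (x + y) z = mul x z + mul y z) ∧
  (∀ x y z, mul x (y + z) = mul x y + mul x z) ∧
  (∀ x y, mul x y = 0 → x = 0 ∨ y = 0)

section PolarMul

variable {R : Type*} [NonUnitalNonAssocRing R] {f : R → R}

/-- Pseudo-planar functions on an arbitrary ring. Over a finite ring injectivity is the same as
being a permutation, and in characteristic two the difference is the usual sum
`f (x + c) + f x`. -/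
def IsPseudoPlanar (f : R → R) : Prop :=
  ∀ c ≠ 0, Function.Injective fun x => f (x + c) - f x + c * x

/-- The product of a ring deformed by the polarization of `f`; in characteristic two this is
`x * y + f (x + y) + f x + f y`. -/
def polarMul (f : R → R) (x y : R) : R :=
  x * y + polar f x y

theorem polarMul_add_left_iff {x y z : R} :
    polarMul f (x + y) z = polarMul f x z + polarMul f y z ↔
      polar f (x + y) z = polar f x z + polar f y z := by
  simp only [polarMul, add_mul, add_add_add_comm, add_right_inj]

theorem polarMul_add_right_iff {x y z : R} :
    polarMul f x (y + z) = polarMul f x y + polarMul f x z ↔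
      polar f x (y + z) = polar f x y + polar f x z := by
  simp only [polarMul, mul_add, add_add_add_comm, add_right_inj]

theorem polarMul_zero_right (hf : f 0 = 0) (x : R) : polarMul f x 0 = 0 := by
  simp [polarMul, polar, hf]

theorem IsPseudoPlanar.polarMul_injective (hf : IsPseudoPlanar f) {x : R} (hx : x ≠ 0) :
    Function.Injective (polarMul f x) := by
  have h : polarMul f x = (· - f x) ∘ fun y => f (y + x) - f y + x * y := by
    ext y
    simp only [polarMul, polar, Function.comp_apply, add_comm x y]
    abel
  exact h ▸ sub_left_injective.comp (hf x hx)

theorem IsPseudoPlanar.eq_zero_or_eq_zero_of_polarMul_eq_zero (hf : IsPseudoPlanar f)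
    (h0 : f 0 = 0) {x y : R} (h : polarMul f x y = 0) : x = 0 ∨ y = 0 :=
  or_iff_not_imp_left.mpr fun hx =>
    hf.polarMul_injective hx (h.trans (polarMul_zero_right h0 x).symm)

theorem presemifield_iff_quadratic_pseudoPlanar_even_general (hf : IsPseudoPlanar f) :
    IsPresemifieldMul (polarMul f) ↔ IsQuadratic f where
  mp h := isQuadratic_iff_polar_add_left.mpr fun x y z => polarMul_add_left_iff.mp (h.1 x y z)
  mpr h :=
    ⟨fun x y z => polarMul_add_left_iff.mpr (h.polar_add_left x y z),
     fun x y z => polarMul_add_right_iff.mpr (h.polar_add_right x y z),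
     fun _ _ => hf.eq_zero_or_eq_zero_of_polarMul_eq_zero h.map_zero⟩

end PolarMul

/-- **Theorem (part 3).** Let `F` be a finite field of characteristic two, `f : F → F` a
pseudo-planar function, and define `x * y = x y + f (x + y) + f x + f y`.  Then
`(F, +, *)` is a presemifield (left and right distributive, no zero divisors) if and only
if `f` is quadratic, i.e.
`f (x+y+z) + f (x+y) + f (x+z) + f (y+z) + f x + f y + f z = 0` for all `x y z`. -/
theorem presemifield_iff_quadratic_pseudoPlanar_even
    (F : Type*) [Field F] [Fintype F] [CharP F 2]
    (f : F → F)
    (hpp : ∀ c : F, c ≠ 0 → Function.Bijective fun x => f (x + c) + f x + c * x)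
    (mul : F → F → F)
    (hmul : ∀ x y : F, mul x y = x * y + f (x + y) + f x + f y) :
    ((∀ x y z : F, mul (x + y) z = mul x z + mul y z) ∧
     (∀ x y z : F, mul x (y + z) = mul x y + mul x z) ∧
     (∀ x y : F, mul x y = 0 → x = 0 ∨ y = 0)) ↔
    (∀ x y z : F,
      f (x + y + z) + f (x + y) + f (x + z) + f (y + z) + f x + f y + f z = 0) := by
  obtain rfl : mul = polarMul f := by
    ext; simp only [hmul, polarMul, polar, CharTwo.sub_eq_add, add_assoc]
  simpa only [IsPresemifieldMul, IsQuadratic, CharTwo.sub_eq_add] using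
    presemifield_iff_quadratic_pseudoPlanar_even_general (f := f) fun c hc => by
      simpa only [CharTwo.sub_eq_add] using (hpp c hc).injective
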